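/- Let A be a finite subset of a finite-dimensional vector space V over ℚ (or ℝ) with affine rank m (i.e., A is contained in an affine subspace of dimension m but no smaller). Then |A+A| ≥ (m+1)|A| − m(m+1)/2. -/

import Mathlib

open scoped Pointwise

/-!
Order `V` compatibly with its addition (lexicographically in a `ℚ`-basis) and build `A` by adding
its elements in increasing order. When a new maximum `a` is added to `s`, let `B` be the set of
`b ∈ insert a s` with `a + b ∉ s + s`; the sumset grows by `|B|`. If `a ∉ affineSpan K s`, then
`B` is all of `insert a s`. In general `B` still affinely spans `insert a s`: if `b ∉ B`, then
`a + b = x + y` with `x, y ∈ s`, where `x` and `y` exceed `b` because they are less than `a`; so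
`b = x + y - a` is an affine combination of larger elements, and one concludes by downward
induction. Hence the sumset always grows by at least `m + 1`, where `m` is the affine rank of
`insert a s`, and by `|s| + 1` whenever the rank increases.
-/

open Finset
open Module (finrank)

section NewSummands

variable {G : Type*} [DecidableEq G]

/-- The summands `b` for which `a + b` is a new element of the sumset when `a` is added to `s`. -/
def newSummands [Add G] (a : G) (s : Finset G) : Finset G :=
  {b ∈ insert a s | a + b ∉ s + s}

lemma mem_newSummands [Add G] {a b : G} {s : Finset G} :
    b ∈ newSummands a s ↔ b ∈ insert a s ∧ a + b ∉ s + s :=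
  mem_filter

lemma card_insert_add_insert [AddCommMagma G] [IsLeftCancelAdd G] (a : G) (s : Finset G) :
    #(insert a s + insert a s) = #(s + s) + #(newSummands a s) := by
  have hunion : insert a s + insert a s = (s + s) ∪ (newSummands a s).image (a + ·) := by
    ext x
    simp only [mem_union, mem_image, mem_newSummands, mem_add, mem_insert]
    grind [add_comm]
  have hdisj : Disjoint (s + s) ((newSummands a s).image (a + ·)) :=
    disjoint_right.2 <| forall_mem_image.2 fun _ hb ↦ (mem_newSummands.1 hb).2
  rw [hunion, card_union_of_disjoint hdisj, card_image_of_injective _ (add_right_injective a)]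

end NewSummands

lemma self_mem_newSummands {M : Type*} [AddCommMonoid M] [LinearOrder M]
    [IsOrderedCancelAddMonoid M] {a : M} {s : Finset M} (ha : ∀ x ∈ s, x < a) :
    a ∈ newSummands a s := by
  refine mem_newSummands.2 ⟨mem_insert_self a s, fun h ↦ ?_⟩
  obtain ⟨x, hx, y, hy, hxy⟩ := mem_add.1 h
  exact (add_lt_add (ha x hx) (ha y hy)).ne hxy

section AffineSpan

variable {K V P : Type*} [DivisionRing K] [AddCommGroup V] [Module K V] [AddTorsor V P]

lemma finrank_vectorSpan_insert_eq_or (s : Set P) [FiniteDimensional K (vectorSpan K s)] (p : P) :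
    finrank K (vectorSpan K (insert p s)) = finrank K (vectorSpan K s) ∨
      p ∉ affineSpan K s ∧
        finrank K (vectorSpan K (insert p s)) = finrank K (vectorSpan K s) + 1 := by
  by_cases hp : p ∈ affineSpan K s
  · exact .inl (by rw [vectorSpan_insert_eq_vectorSpan hp])
  · have hmono : finrank K (vectorSpan K s) ≤ finrank K (vectorSpan K (insert p s)) :=
      Submodule.finrank_mono (vectorSpan_mono K (Set.subset_insert p s))
    have := finrank_vectorSpan_insert_le_set K s p
    grind

variable (K) in
lemma finrank_vectorSpan_add_one_le_card {s : Finset P} (hs : s.Nonempty) :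
    finrank K (vectorSpan K (s : Set P)) + 1 ≤ #s := by
  classical
  have hcard : #s = #s - 1 + 1 := (Nat.sub_add_cancel hs.card_pos).symm
  have hrank := finrank_vectorSpan_image_finset_le K id s hcard
  rw [image_id] at hrank
  lia

end AffineSpan

lemma mem_affineSubspace_of_add_eq_add {K V : Type*} [Ring K] [AddCommGroup V] [Module K V]
    {Q : AffineSubspace K V} {x y z w : V} (hx : x ∈ Q) (hy : y ∈ Q) (hz : z ∈ Q)
    (h : x + y = z + w) : w ∈ Q := by
  have hw : w = (1 : K) • (x -ᵥ z) +ᵥ y := by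
    rw [one_smul, vsub_eq_sub, vadd_eq_add, sub_add_eq_add_sub, h, add_sub_cancel_left]
  exact hw ▸ Q.smul_vsub_vadd_mem 1 hx hz hy

section LinearOrder

variable {K V : Type*} [AddCommGroup V] [LinearOrder V] [IsOrderedAddMonoid V]
  {a : V} {s : Finset V}

lemma insert_subset_affineSpan_newSummands [Ring K] [Module K V] (ha : ∀ x ∈ s, x < a) :
    (insert a s : Set V) ⊆ affineSpan K (newSummands a s : Set V) := by
  have hspan : ∀ b ∈ newSummands a s, b ∈ affineSpan K (newSummands a s : Set V) :=
    fun b hb ↦ mem_affineSpan K hb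
  intro b hb
  have hwf : (insert a s : Set V).WellFoundedOn (· > ·) := (s.finite_toSet.insert a).wellFoundedOn
  refine hwf.induction hb fun b hb ih ↦ ?_
  by_cases hnew : b ∈ newSummands a s
  · exact hspan b hnew
  have hsum : a + b ∈ s + s := by
    by_contra h
    exact hnew (mem_newSummands.2 ⟨mod_cast hb, h⟩)
  obtain ⟨x, hx, y, hy, hxy⟩ := mem_add.1 hsum
  have hbx : b < x := by grind
  have hby : b < y := by grind
  exact mem_affineSubspace_of_add_eq_add (ih x (.inr hx) hbx) (ih y (.inr hy) hby)
    (hspan a (self_mem_newSummands ha)) hxy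

lemma newSummands_eq_insert_of_notMem_affineSpan [Ring K] [Module K V]
    (ha : ∀ x ∈ s, x < a) (haK : a ∉ affineSpan K (s : Set V)) :
    newSummands a s = insert a s := by
  refine (filter_subset _ _).antisymm fun b hb ↦ ?_
  obtain rfl | hbs := mem_insert.1 hb
  · exact self_mem_newSummands ha
  refine mem_newSummands.2 ⟨hb, fun hsum ↦ haK ?_⟩
  obtain ⟨x, hx, y, hy, hxy⟩ := mem_add.1 hsum
  exact mem_affineSubspace_of_add_eq_add (mem_affineSpan K hx) (mem_affineSpan K hy)
    (mem_affineSpan K hbs) (hxy.trans (add_comm a b))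

variable [DivisionRing K] [Module K V]

variable (K) in
lemma finrank_vectorSpan_insert_add_one_le_card_newSummands (ha : ∀ x ∈ s, x < a) :
    finrank K (vectorSpan K (insert a s : Set V)) + 1 ≤ #(newSummands a s) :=
  calc finrank K (vectorSpan K (insert a s : Set V)) + 1
      ≤ finrank K (vectorSpan K (newSummands a s : Set V)) + 1 := by
        have := finiteDimensional_vectorSpan_of_finite K (newSummands a s).finite_toSet
        have hspan := affineSpan_le.2 (insert_subset_affineSpan_newSummands (K := K) ha)
        have hdir := AffineSubspace.direction_le hspan
        rw [direction_affineSpan, direction_affineSpan] at hdir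
        exact Nat.add_le_add_right (Submodule.finrank_mono hdir) 1
    _ ≤ #(newSummands a s) :=
        finrank_vectorSpan_add_one_le_card K ⟨a, self_mem_newSummands ha⟩

variable (K) in
lemma finrank_add_one_mul_card_le_card_add_self_add_choose (A : Finset V) :
    (finrank K (vectorSpan K (A : Set V)) + 1) * #A ≤
      #(A + A) + (finrank K (vectorSpan K (A : Set V)) + 1).choose 2 := by
  induction A using Finset.induction_on_max with
  | empty => simp
  | insert a s ha ih =>
    have hcard : #(insert a s) = #s + 1 := card_insert_of_notMem fun h ↦ (ha a h).false
    have := finiteDimensional_vectorSpan_of_finite K s.finite_toSet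
    rw [card_insert_add_insert, hcard, coe_insert]
    obtain hrank | ⟨haK, hrank⟩ := finrank_vectorSpan_insert_eq_or (K := K) (s : Set V) a
    · have hnew := finrank_vectorSpan_insert_add_one_le_card_newSummands K ha
      rw [hrank] at hnew ⊢
      linarith
    · rw [newSummands_eq_insert_of_notMem_affineSpan ha haK, hcard, hrank,
        Nat.choose_succ_succ' _ 1, Nat.choose_one_right]
      linarith

end LinearOrder

lemma exists_linearOrder_isOrderedAddMonoid (G : Type*) [AddCommGroup G] [IsAddTorsionFree G] :
    ∃ _ : LinearOrder G, IsOrderedAddMonoid G := by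
  obtain ⟨ι, ⟨b⟩⟩ := Module.Basis.exists_basis ℚ (DivisibleHull G)
  obtain ⟨_, -⟩ := exists_wellFoundedLT (α := ι)
  let f : G → Lex (ι →₀ ℚ) := fun g ↦ toLex (b.repr g)
  have hf : Function.Injective f :=
    toLex.injective.comp (b.repr.injective.comp DivisibleHull.coe_injective)
  let _ : LinearOrder G := .lift' f hf
  exact ⟨inferInstance, Function.Injective.isOrderedAddMonoid f (fun x y ↦ by simp [f]) .rfl⟩

theorem freiman_lemma_general (K V : Type*) [DivisionRing K] [CharZero K] [AddCommGroup V]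
    [Module K V] [DecidableEq V] (A : Finset V) (m : ℕ)
    (hm : finrank K (vectorSpan K (A : Set V)) = m) :
    ((m : ℤ) + 1) * A.card - m * (m + 1) / 2 ≤ ((A + A).card : ℤ) := by
  have := IsAddTorsionFree.of_isTorsionFree K V
  obtain ⟨order, _⟩ := exists_linearOrder_isOrderedAddMonoid V
  obtain rfl : ‹DecidableEq V› = order.toDecidableEq := Subsingleton.elim _ _
  have h := finrank_add_one_mul_card_le_card_add_self_add_choose K A
  rw [hm, Nat.choose_two_right, Nat.add_sub_cancel, mul_comm (m + 1) m] at h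
  rw [sub_le_iff_le_add]
  exact_mod_cast h

/-- Freiman's Lemma: if a finite subset `A` of a finite-dimensional `ℚ`-vector space has
affine rank `m` (its affine span has dimension `m`), then `|A + A| ≥ (m+1)|A| − m(m+1)/2`. -/
theorem freiman_lemma (V : Type*) [AddCommGroup V] [Module ℚ V] [FiniteDimensional ℚ V]
    [DecidableEq V] (A : Finset V) (m : ℕ)
    (hm : Module.finrank ℚ (vectorSpan ℚ (A : Set V)) = m) :
    ((m : ℤ) + 1) * A.card - m * (m + 1) / 2 ≤ ((A + A).card : ℤ) :=
  freiman_lemma_general ℚ V A m hm
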